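/- Let X be a pure d-dimensional simplicial complex. Then for every 1 ≤ i < d, the bipartiteness ratio of the i-graph of X satisfies β(G_i(X)) ≥ 1/(i+2). -/

import Mathlib

/-!
An `(i+1)`-face `T` has `n = i + 2` facets, any two distinct ones of which have union `T`; hence
`G_i(X)` is the edge-disjoint union, over the `(i+1)`-faces `T`, of `deg T` copies of the complete
graph `K_n` on the facets of `T`.  Both the numerator and the denominator of the bipartiteness
ratio are additive over this decomposition, so it is enough to prove the bound in `K_n`.
There, with `a = |S1|` and `b = |S2|`, it reads
`(a + b) (n - 1) ≤ n ((a + b) (n - a - b) + a (a - 1) + b (b - 1))`,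
which holds for integers `a, b ≥ 0` with `a + b ≤ n` and `n ≥ 3` (`clique_ineq`).
Integrality is needed only for `n = 3`.
Purity and `i < d` ensure that `G_i(X)` has a vertex and that all its degrees are positive, so
neither the infimum nor the quotients take junk values.
-/

open Finset

open scoped Classical

noncomputable section

/-- A pure `d`-dimensional simplicial complex on a finite vertex set `V`: a collection of
finite subsets of `V` (the faces), containing the empty face, closed under taking subsets,
in which every face is contained in a face of cardinality `d+1`. -/
structure SC (V : Type) [DecidableEq V] [Fintype V] (d : ℕ) where
  faces : Finset (Finset V)
  empty_mem : ∅ ∈ faces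
  down_closed : ∀ σ ∈ faces, ∀ τ ⊆ σ, τ ∈ faces
  pure : ∀ σ ∈ faces, ∃ τ ∈ faces, σ ⊆ τ ∧ τ.card = d + 1

namespace SC

variable {V : Type} [DecidableEq V] [Fintype V] {d : ℕ}

/-- The faces of cardinality `k`, i.e. the set `X(k-1)` of `(k-1)`-dimensional faces. -/
def fc (X : SC V d) (k : ℕ) : Finset (Finset V) :=
  X.faces.filter fun σ => σ.card = k

/-- The degree of a face: the number of top (`d`-dimensional) faces containing it. -/
def deg (X : SC V d) (σ : Finset V) : ℕ :=
  ((X.fc (d + 1)).filter fun τ => σ ⊆ τ).card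

/-- The norm of a set `W` of faces of cardinality `k`:
`‖W‖ = (Σ_{σ∈W} deg σ) / (Σ_{τ∈X(k-1)} deg τ)`. -/
def norm (X : SC V d) (k : ℕ) (W : Finset (Finset V)) : ℝ :=
  (∑ σ ∈ (X.fc k).filter (· ∈ W), (X.deg σ : ℝ)) / ∑ σ ∈ X.fc k, (X.deg σ : ℝ)

/-- `‖A_σ‖_σ`: the norm, computed inside the link of `σ`, of the localization to the link
of a set `A` of cardinality-`k` faces of `X`.  (The faces of the link of `σ` correspond
bijectively to the faces `ρ ⊇ σ` of `X` via `τ ↦ σ ∪ τ`, and this correspondence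
preserves degrees.) -/
def linkNorm (X : SC V d) (σ : Finset V) (k : ℕ) (A : Finset (Finset V)) : ℝ :=
  (∑ ρ ∈ (X.fc k).filter (fun ρ => σ ⊆ ρ ∧ ρ ∈ A), (X.deg ρ : ℝ)) /
    ∑ ρ ∈ (X.fc k).filter (fun ρ => σ ⊆ ρ), (X.deg ρ : ℝ)

/-- For a set `S` of vertices, the norm `‖·‖_σ` in the link of `σ` of the set of
`(m-1)`-dimensional faces of the link all of whose vertices lie in `S`.
For `m = 1` this is `‖S‖_σ` and for `m = 2` it is `‖E(S)‖_σ`. -/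
def linkSubsetNorm (X : SC V d) (σ : Finset V) (m : ℕ) (S : Finset V) : ℝ :=
  (∑ ρ ∈ (X.fc (σ.card + m)).filter (fun ρ => σ ⊆ ρ ∧ ρ \ σ ⊆ S), (X.deg ρ : ℝ)) /
    ∑ ρ ∈ (X.fc (σ.card + m)).filter (fun ρ => σ ⊆ ρ), (X.deg ρ : ℝ)

/-- `X` is an `α`-skeleton expander: for every face `σ ∈ X` (including `σ = ∅`) and every
set `S` of vertices of the link of `σ`, `‖E(S)‖_σ ≤ ‖S‖_σ (‖S‖_σ + α)`. -/
def IsSkeletonExpander (X : SC V d) (α : ℝ) : Prop :=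
  ∀ σ ∈ X.faces, ∀ S : Finset V,
    X.linkSubsetNorm σ 2 S ≤ X.linkSubsetNorm σ 1 S * (X.linkSubsetNorm σ 1 S + α)

/-- The expanding faces `ψ(W)` of a set `W` of cardinality-`k` faces: the
cardinality-`(k+1)` faces containing both a cardinality-`k` face in `W` and a
cardinality-`k` face not in `W`. -/
def psi (X : SC V d) (k : ℕ) (W : Finset (Finset V)) : Finset (Finset V) :=
  (X.fc (k + 1)).filter fun τ =>
    (∃ σ ⊆ τ, σ.card = k ∧ σ ∈ W) ∧ ∃ σ ⊆ τ, σ.card = k ∧ σ ∉ W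

/-- `X` is an `ε`-colorful expander: for every `0 ≤ i < d` and every `i`-cochain `W` with
`0 < ‖W‖ ≤ 1/2`, one has `‖ψ(W)‖/‖W‖ ≥ ε`. -/
def IsColorfulExpander (X : SC V d) (ε : ℝ) : Prop :=
  ∀ i : ℕ, i < d → ∀ W ⊆ X.fc (i + 1),
    0 < X.norm (i + 1) W → X.norm (i + 1) W ≤ 1 / 2 →
    ε ≤ X.norm (i + 2) (X.psi (i + 1) W) / X.norm (i + 1) W

/-- The container `Γ(W)` of a set `W` of cardinality-`k` faces: the cardinality-`(k+1)`
faces containing at least one cardinality-`k` face of `W`. -/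
def container (X : SC V d) (k : ℕ) (W : Finset (Finset V)) : Finset (Finset V) :=
  (X.fc (k + 1)).filter fun τ => ∃ σ ⊆ τ, σ.card = k ∧ σ ∈ W

/-- Fat faces: for an `i`-cochain `W` and fatness constant `η`, `X.fat i W η m` is the
set `S^{i-m}(W)` of fat faces of dimension `i - m` (so of cardinality `i + 1 - m`);
`m = i + 1` gives `S^{-1}(W)`. -/
def fat (X : SC V d) (i : ℕ) (W : Finset (Finset V)) (η : ℝ) : ℕ → Finset (Finset V)
  | 0 => (X.fc (i + 1)).filter (· ∈ W)
  | m + 1 => (X.fc (i - m)).filter fun σ =>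
      η ^ 2 ^ m ≤ X.linkNorm σ (i - m + 1) (fat X i W η m)

/-- Full faces: `X.full i W η j` is `F^j(W)`, the set of cardinality-`(j+1)` faces all of
whose cardinality-`j` subsets lie in `S^{j-1}(W) = X.fat i W η (i + 1 - j)`. -/
def full (X : SC V d) (i : ℕ) (W : Finset (Finset V)) (η : ℝ) (j : ℕ) :
    Finset (Finset V) :=
  (X.fc (j + 1)).filter fun τ => ∀ σ ⊆ τ, σ.card = j → σ ∈ X.fat i W η (i + 1 - j)

/-- `X.prNI ka kb A B` is the probability `Pr[P_{ka-1} ∈ A ∧ P_{kb-1} ∉ B]` for the chain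
`P_d ⊃ P_{d-1} ⊃ ⋯` in which `P_d` is a uniformly random top face and each `P_{l-1}` is
obtained from `P_l` by deleting a uniformly random vertex.  (Given `P_{ka-1} = σ`,
the face `P_{kb-1}` is a uniformly random cardinality-`kb` subset of `σ`, and
`Pr[P_{ka-1} = σ] = deg σ / Σ_{τ ∈ X(ka-1)} deg τ`.) -/
def prNI (X : SC V d) (ka kb : ℕ) (A B : Finset (Finset V)) : ℝ :=
  (∑ σ ∈ (X.fc ka).filter (· ∈ A),
      (X.deg σ : ℝ) * (((σ.powersetCard kb).filter (· ∉ B)).card : ℝ)) /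
    ((ka.choose kb : ℝ) * ∑ σ ∈ X.fc ka, (X.deg σ : ℝ))

end SC

/-! ### Multigraphs, given by symmetric adjacency-count matrices -/

/-- Degree of a vertex in the multigraph with adjacency counts `A`. -/
def mdeg {U : Type} [Fintype U] (A : U → U → ℕ) (v : U) : ℕ := ∑ u, A v u

/-- The transition matrix `DA` of the random walk on the multigraph `A`. -/
def transition {U : Type} [Fintype U] (A : U → U → ℕ) : Matrix U U ℝ :=
  Matrix.of fun u v => (A u v : ℝ) / (mdeg A u : ℝ)

/-- The normalized adjacency matrix `Ã = D^(1/2) A D^(1/2)`. -/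
def normAdj {U : Type} [Fintype U] (A : U → U → ℕ) : Matrix U U ℝ :=
  Matrix.of fun u v => (A u v : ℝ) / (Real.sqrt (mdeg A u) * Real.sqrt (mdeg A v))

/-- The stationary distribution `π(v) = deg v / Σ_u deg u`. -/
def statDist {U : Type} [Fintype U] (A : U → U → ℕ) (v : U) : ℝ :=
  (mdeg A v : ℝ) / ∑ u, (mdeg A u : ℝ)

/-- Maximum degree. -/
def dmaxDeg {U : Type} [Fintype U] (A : U → U → ℕ) : ℕ := ⨆ v, mdeg A v

/-- Minimum degree. -/
def dminDeg {U : Type} [Fintype U] (A : U → U → ℕ) : ℕ := ⨅ v, mdeg A v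

/-- The random walk on the multigraph `A` is `μ`-rapidly mixing: for every initial
probability distribution `π0` and every `t`, `‖π0 (DA)^t − π‖₂ ≤ √(dmax/dmin) μ^t`. -/
def IsRapidMixing {U : Type} [Fintype U] [DecidableEq U] (A : U → U → ℕ) (μ : ℝ) : Prop :=
  ∀ π0 : U → ℝ, (∀ v, 0 ≤ π0 v) → ∑ v, π0 v = 1 → ∀ t : ℕ,
    Real.sqrt (∑ v, (Matrix.vecMul π0 (transition A ^ t) v - statDist A v) ^ 2) ≤
      Real.sqrt ((dmaxDeg A : ℝ) / (dminDeg A : ℝ)) * μ ^ t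

/-- The lazy version of a multigraph: add `deg v` self-loops at every vertex `v`. -/
def lazy {U : Type} [Fintype U] [DecidableEq U] (A : U → U → ℕ) : U → U → ℕ :=
  fun u v => A u v + if u = v then mdeg A u else 0

/-- `|E(S, S̄)|`: the number of edges with one endpoint in `S` and one in its complement. -/
def cutEdges {U : Type} [Fintype U] [DecidableEq U] (A : U → U → ℕ) (S : Finset U) : ℝ :=
  ∑ u ∈ S, ∑ v ∈ Sᶜ, (A u v : ℝ)

/-- `vol S = Σ_{v ∈ S} deg v`. -/
def vol {U : Type} [Fintype U] (A : U → U → ℕ) (S : Finset U) : ℝ :=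
  ∑ v ∈ S, (mdeg A v : ℝ)

/-- The conductance `Φ(G) = min { |E(S,S̄)|/vol S : ∅ ≠ S, vol S ≤ vol V / 2 }`. -/
def conductance {U : Type} [Fintype U] [DecidableEq U] (A : U → U → ℕ) : ℝ :=
  sInf { x : ℝ | ∃ S : Finset U, S.Nonempty ∧ vol A S ≤ vol A Finset.univ / 2 ∧
    x = cutEdges A S / vol A S }

/-- `|E(T)|`: the number of edges with both endpoints in `T`. -/
def edgesWithin {U : Type} [Fintype U] (A : U → U → ℕ) (T : Finset U) : ℝ :=
  ((∑ u ∈ T, ∑ v ∈ T, (A u v : ℝ)) + ∑ v ∈ T, (A v v : ℝ)) / 2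

/-- The bipartiteness ratio
`β(G) = min {(|E(S,S̄)| + 2(|E(S1)| + |E(S2)|))/vol S : S = S1 ⊔ S2 ≠ ∅}`. -/
def bipRatio {U : Type} [Fintype U] [DecidableEq U] (A : U → U → ℕ) : ℝ :=
  sInf { x : ℝ | ∃ S1 S2 : Finset U, (S1 ∪ S2).Nonempty ∧ Disjoint S1 S2 ∧
    x = (cutEdges A (S1 ∪ S2) + 2 * (edgesWithin A S1 + edgesWithin A S2)) /
      vol A (S1 ∪ S2) }

/-- The adjacency counts of the `i`-graph `G_i(X)`: its vertices are the `i`-faces of `X`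
(cardinality `i+1`), and two neighboring `i`-faces `σ ∼ τ` (i.e. `σ ∪ τ ∈ X(i+1)`) are
joined by `deg (σ ∪ τ)` parallel edges. -/
def SC.adjG {V : Type} [DecidableEq V] [Fintype V] {d : ℕ} (X : SC V d) (i : ℕ) :
    {σ // σ ∈ X.fc (i + 1)} → {σ // σ ∈ X.fc (i + 1)} → ℕ :=
  fun σ τ => if σ.1 ∪ τ.1 ∈ X.fc (i + 2) then X.deg (σ.1 ∪ τ.1) else 0

end

/-! ### The bound for a clique -/

/-- The bound `β(K_n) ≥ 1/n` for `n ≥ 3`, with denominators cleared. -/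
lemma clique_ineq (a b n : ℕ) (hn : 3 ≤ n) (h : a + b ≤ n) :
    (0 : ℝ) ≤ n * (((a : ℝ) + b) * (n - (a + b)) + (a ^ 2 - a) + (b ^ 2 - b))
      - ((a : ℝ) + b) * (n - 1) := by
  obtain rfl | hn4 := hn.eq_or_lt
  · have ha : a ≤ 3 := by omega
    have hb : b ≤ 3 := by omega
    interval_cases a <;> interval_cases b <;> first | omega | norm_num
  · have h4 : (4 : ℝ) ≤ n := by exact_mod_cast hn4
    have h' : (a : ℝ) + b ≤ n := by exact_mod_cast h
    -- Since `a² + b² ≥ s²/2` with `s = a + b ≤ n`, it suffices that `n (n - s/2 - 1) ≥ n - 1`.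
    have h1 : (0 : ℝ) ≤ n * (n - (a + b) / 2 - 1) - (n - 1) := by nlinarith
    have h2 := mul_nonneg (by positivity : (0 : ℝ) ≤ a + b) h1
    have h3 := mul_nonneg (by positivity : (0 : ℝ) ≤ (n : ℝ)) (sq_nonneg ((a : ℝ) - b))
    nlinarith

/-- The kernel whose `A`-weighted sum is `n` times the numerator minus the denominator of the
bipartiteness ratio of `(S1 ∪ S2, S1, S2)`, for disjoint `S1`, `S2` and loopless `A`. -/
def ker {U : Type} [DecidableEq U] (n : ℕ) (S1 S2 : Finset U) (u v : U) : ℝ :=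
  n * (((if u ∈ S1 then 1 else 0) + (if u ∈ S2 then 1 else 0)) *
        (1 - ((if v ∈ S1 then 1 else 0) + (if v ∈ S2 then 1 else 0)))
      + (if u ∈ S1 then 1 else 0) * (if v ∈ S1 then 1 else 0)
      + (if u ∈ S2 then 1 else 0) * (if v ∈ S2 then 1 else 0))
    - ((if u ∈ S1 then 1 else 0) + (if u ∈ S2 then 1 else 0))

lemma sum_ind {U : Type} [Fintype U] [DecidableEq U] (f : U → ℝ) (S : Finset U) :
    ∑ u ∈ S, f u = ∑ u, f u * (if u ∈ S then 1 else 0) := by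
  simp [Finset.sum_ite_mem]

lemma sum_ker {U : Type} [Fintype U] [DecidableEq U] (A : U → U → ℕ)
    (hA : ∀ u, A u u = 0) (n : ℕ) (S1 S2 : Finset U) (hd : Disjoint S1 S2) :
    n * (cutEdges A (S1 ∪ S2) + 2 * (edgesWithin A S1 + edgesWithin A S2)) - vol A (S1 ∪ S2)
      = ∑ u, ∑ v, (A u v : ℝ) * ker n S1 S2 u v := by
  have hU : ∀ u, (if u ∈ S1 ∪ S2 then (1 : ℝ) else 0)
      = (if u ∈ S1 then 1 else 0) + (if u ∈ S2 then 1 else 0) := by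
    intro u
    have hu : u ∈ S1 → u ∉ S2 := fun h => Finset.disjoint_left.1 hd h
    by_cases h1 : u ∈ S1 <;> by_cases h2 : u ∈ S2 <;> simp_all
  have hC : ∀ u, (if u ∈ (S1 ∪ S2)ᶜ then (1 : ℝ) else 0)
      = 1 - ((if u ∈ S1 then 1 else 0) + (if u ∈ S2 then 1 else 0)) := by
    intro u
    rw [← hU]
    by_cases h : u ∈ S1 ∪ S2 <;> simp only [Finset.mem_compl, h] <;> simp
  simp only [cutEdges, edgesWithin, vol, mdeg, hA, Nat.cast_zero, zero_mul, Finset.sum_const_zero,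
    add_zero, sum_ind _ S1, sum_ind _ S2, sum_ind _ (S1 ∪ S2), sum_ind _ (S1 ∪ S2)ᶜ, hU, hC, Nat.cast_sum]
  have h2 : ∀ a b : ℝ, 2 * (a / 2 + b / 2) = a + b := fun a b => by ring
  rw [h2]
  simp only [Finset.mul_sum, Finset.sum_mul, ← Finset.sum_add_distrib, ← Finset.sum_sub_distrib]
  refine Finset.sum_congr rfl fun u _ => Finset.sum_congr rfl fun v _ => ?_
  unfold ker
  ring

/-- The clique bound on an `n`-element set `B` of vertices. -/
lemma ker_clique {U : Type} [DecidableEq U] (n : ℕ) (hn : 3 ≤ n) (S1 S2 B : Finset U)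
    (hd : Disjoint S1 S2)
    (hB : B.card = n) : 0 ≤ ∑ u ∈ B, ∑ v ∈ B, if u ≠ v then ker n S1 S2 u v else 0 := by
  have hsplit : ∀ u ∈ B, (∑ v ∈ B, if u ≠ v then ker n S1 S2 u v else 0)
      = ∑ v ∈ B, ker n S1 S2 u v - ker n S1 S2 u u := by
    intro u hu
    rw [eq_sub_iff_add_eq, ← Finset.sum_erase_add B _ hu, ← Finset.sum_erase_add B _ hu]
    simp only [ne_eq, not_true_eq_false, if_false, add_zero]
    congr 1
    refine Finset.sum_congr rfl fun v hv => ?_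
    rw [if_pos (Finset.ne_of_mem_erase hv).symm]
  have hdiag : ∀ u, ker n S1 S2 u u
      = (n - 1) * ((if u ∈ S1 then 1 else 0) + (if u ∈ S2 then 1 else 0)) := by
    intro u
    have hu : u ∈ S1 → u ∉ S2 := fun h => Finset.disjoint_left.1 hd h
    unfold ker
    by_cases h1 : u ∈ S1 <;> by_cases h2 : u ∈ S2 <;> simp_all
  have hle : (B ∩ S1).card + (B ∩ S2).card ≤ n := by
    rw [← Finset.card_union_of_disjoint
      (hd.mono Finset.inter_subset_right Finset.inter_subset_right), ← hB]
    exact Finset.card_le_card (Finset.union_subset Finset.inter_subset_left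
      Finset.inter_subset_left)
  have hP : ∀ S : Finset U, ∑ u ∈ B, (if u ∈ S then (1 : ℝ) else 0) = (B ∩ S).card := by
    intro S; simp [Finset.sum_ite_mem]
  have key := clique_ineq _ _ n hn hle
  rw [Finset.sum_congr rfl hsplit, Finset.sum_sub_distrib]
  simp only [hdiag]
  simp only [ker, Finset.sum_add_distrib, Finset.sum_sub_distrib, ← Finset.mul_sum,
    ← Finset.sum_mul, hP, Finset.sum_const, hB, nsmul_eq_mul, mul_one]
  refine key.trans_eq ?_
  ring

/-! ### The clique decomposition of the `i`-graph -/

namespace SC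

/-- Two facets of an `(i+1)`-face `T` have union `T` exactly when they are distinct. -/
lemma union_eq_iff {V : Type} [DecidableEq V] {i : ℕ} {u v T : Finset V}
    (hu : u.card = i + 1) (hv : v.card = i + 1) (hT : T.card = i + 2) :
    u ∪ v = T ↔ u ⊆ T ∧ v ⊆ T ∧ u ≠ v := by
  constructor
  · rintro rfl
    refine ⟨Finset.subset_union_left, Finset.subset_union_right, ?_⟩
    rintro rfl
    rw [Finset.union_self] at hT
    omega
  · rintro ⟨h1, h2, hne⟩
    refine Finset.eq_of_subset_of_card_le (Finset.union_subset h1 h2) ?_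
    have hlt : u.card < (u ∪ v).card := by
      refine Finset.card_lt_card (Finset.ssubset_iff_subset_ne.2
        ⟨Finset.subset_union_left, fun h => hne ?_⟩)
      exact (Finset.eq_of_subset_of_card_le (Finset.union_eq_left.1 h.symm) (by omega)).symm
    omega

variable {V : Type} [DecidableEq V] [Fintype V] {d : ℕ}

lemma mem_fc (X : SC V d) {k : ℕ} {σ : Finset V} : σ ∈ X.fc k ↔ σ ∈ X.faces ∧ σ.card = k := by
  simp [fc]

lemma deg_pos (X : SC V d) {σ : Finset V} (h : σ ∈ X.faces) : 0 < X.deg σ := by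
  obtain ⟨τ, hτ, hs, hc⟩ := X.pure σ h
  exact Finset.card_pos.2 ⟨τ, Finset.mem_filter.2 ⟨X.mem_fc.2 ⟨hτ, hc⟩, hs⟩⟩

/-- The facets of an `(i+1)`-face, as vertices of `G_i(X)`. -/
def facets (X : SC V d) (i : ℕ) (T : Finset V) : Finset {σ // σ ∈ X.fc (i + 1)} :=
  Finset.univ.filter fun u => u.1 ⊆ T

lemma card_facets (X : SC V d) {i : ℕ} {T : Finset V} (hT : T ∈ X.fc (i + 2)) :
    (X.facets i T).card = i + 2 := by
  have h : (X.facets i T).map (Function.Embedding.subtype _) = T.powersetCard (i + 1) := by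
    ext u
    simp only [facets, Finset.mem_map, Finset.mem_filter, Finset.mem_univ, true_and,
      Function.Embedding.coe_subtype, Finset.mem_powersetCard]
    constructor
    · rintro ⟨w, hw, rfl⟩
      exact ⟨hw, (X.mem_fc.1 w.2).2⟩
    · rintro ⟨h1, h2⟩
      exact ⟨⟨u, X.mem_fc.2 ⟨X.down_closed T (X.mem_fc.1 hT).1 u h1, h2⟩⟩, h1, rfl⟩
  rw [← Finset.card_map (Function.Embedding.subtype _), h, Finset.card_powersetCard,
    (X.mem_fc.1 hT).2]
  simp

/-- The decomposition of `G_i(X)` into cliques, one on the facets of each `(i+1)`-face `T`, with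
multiplicity `deg T`. -/
lemma sum_adjG (X : SC V d) (i : ℕ)
    (K : {σ // σ ∈ X.fc (i + 1)} → {σ // σ ∈ X.fc (i + 1)} → ℝ) :
    ∑ u, ∑ v, (X.adjG i u v : ℝ) * K u v
      = ∑ T ∈ X.fc (i + 2), (X.deg T : ℝ) *
          ∑ u ∈ X.facets i T, ∑ v ∈ X.facets i T, if u ≠ v then K u v else 0 := by
  have h1 : ∀ u v, (X.adjG i u v : ℝ) * K u v
      = ∑ T ∈ X.fc (i + 2), if u.1 ∪ v.1 = T then (X.deg T : ℝ) * K u v else 0 := by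
    intro u v
    rw [Finset.sum_ite_eq]
    simp only [adjG]
    split_ifs <;> simp
  simp only [h1]
  rw [Finset.sum_congr rfl fun u _ => Finset.sum_comm, Finset.sum_comm]
  refine Finset.sum_congr rfl fun T hT => ?_
  simp only [facets, Finset.sum_filter, Finset.mul_sum]
  refine Finset.sum_congr rfl fun u _ => ?_
  by_cases hu : u.1 ⊆ T
  · rw [if_pos hu, Finset.mul_sum]
    refine Finset.sum_congr rfl fun v _ => ?_
    have := union_eq_iff (X.mem_fc.1 u.2).2 (X.mem_fc.1 v.2).2 (X.mem_fc.1 hT).2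
    simp only [this, hu, true_and, ne_eq, Subtype.ext_iff]
    by_cases hv : v.1 ⊆ T <;> by_cases he : u.1 = v.1 <;> simp [hv, he]
  · rw [if_neg hu, mul_zero]
    refine Finset.sum_eq_zero fun v _ => if_neg ?_
    rintro rfl
    exact hu Finset.subset_union_left

/-- For `i < d` every vertex of `G_i(X)` has a neighbour. -/
lemma mdeg_pos (X : SC V d) {i : ℕ} (hi : i < d) (u : {σ // σ ∈ X.fc (i + 1)}) :
    0 < mdeg (X.adjG i) u := by
  obtain ⟨hu, huc⟩ := X.mem_fc.1 u.2
  obtain ⟨τ, hτ, hs, hc⟩ := X.pure u.1 hu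
  obtain ⟨T, h1, h2, hT⟩ := Finset.exists_subsuperset_card_eq hs (n := i + 2)
    (by omega) (by omega)
  have hTf : T ∈ X.fc (i + 2) := X.mem_fc.2 ⟨X.down_closed τ hτ T h2, hT⟩
  have hmem : u ∈ X.facets i T := by simp [facets, h1]
  obtain ⟨v, hv, hne⟩ := Finset.exists_mem_ne (by rw [X.card_facets hTf]; omega) u
  have hun : u.1 ∪ v.1 = T := (union_eq_iff huc (X.mem_fc.1 v.2).2 hT).2
    ⟨h1, (Finset.mem_filter.1 hv).2, fun h => hne (Subtype.ext h).symm⟩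
  refine Finset.sum_pos' (fun _ _ => Nat.zero_le _) ⟨v, Finset.mem_univ _, ?_⟩
  simp only [adjG, hun, if_pos hTf]
  exact X.deg_pos (X.mem_fc.1 hTf).1

end SC

/-- **Bipartiteness ratio of the `i`-graphs.** If `X` is a pure `d`-dimensional simplicial
complex, then for every `1 ≤ i < d` the bipartiteness ratio of `G_i(X)` satisfies
`β(G_i(X)) ≥ 1/(i+2)`. -/
theorem statement13 {V : Type} [DecidableEq V] [Fintype V] {d : ℕ} (X : SC V d) :
    ∀ i : ℕ, 1 ≤ i → i < d → 1 / ((i : ℝ) + 2) ≤ bipRatio (X.adjG i) := by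
  intro i hi hd
  refine le_csInf ?_ ?_
  · -- `X` has an `i`-face, inside a top face containing `∅`.
    obtain ⟨τ, hτ, -, hc⟩ := X.pure ∅ X.empty_mem
    obtain ⟨σ, hσ, hσc⟩ := Finset.exists_subset_card_eq (s := τ) (n := i + 1) (by omega)
    exact ⟨_, {⟨σ, X.mem_fc.2 ⟨X.down_closed τ hτ σ hσ, hσc⟩⟩}, ∅, by simp, by simp, rfl⟩
  · rintro x ⟨S1, S2, hne, hdis, rfl⟩
    have hvol : 0 < vol (X.adjG i) (S1 ∪ S2) :=
      Finset.sum_pos (fun u _ => by exact_mod_cast X.mdeg_pos hd u) hne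
    have hloop : ∀ u, X.adjG i u u = 0 := by
      intro u
      refine if_neg fun h => ?_
      have h1 := (X.mem_fc.1 h).2
      rw [Finset.union_self, (X.mem_fc.1 u.2).2] at h1
      omega
    have hsum := sum_ker (X.adjG i) hloop (i + 2) S1 S2 hdis
    have hnn : 0 ≤ ∑ u, ∑ v, (X.adjG i u v : ℝ) * ker (i + 2) S1 S2 u v := by
      rw [X.sum_adjG]
      exact Finset.sum_nonneg fun T hT => mul_nonneg (Nat.cast_nonneg _)
        (ker_clique (i + 2) (by omega) S1 S2 _ hdis (X.card_facets hT))
    rw [← hsum] at hnn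
    push_cast at hnn
    rw [div_le_div_iff₀ (by positivity) hvol]
    linarith
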